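/- arXiv:hep-th/0412233 — 2 statements merged into one kernel-verified Lean document; each statement's English description precedes it below -/
import Mathlib

section
/- Let l ≥ 1 and let α be a continuous proper action of the additive group ℝ^l on a Hausdorff topological space M. Let φ : M → ℂ be a continuous function with compact support. Then sup_{p ∈ M} ∫_{ℝ^l} |φ(α_z(p))| dz < ∞, where the integral is with respect to Lebesgue measure on ℝ^l. -/
open MeasureTheory

/-!
The integral of a function along an orbit depends only on the orbit, by invariance of the measure.
An orbit that misses the support `K` of `φ` contributes `0`; on any other orbit the base point may
be moved into `K`, and then the integrand lives on the set of group elements carrying some point of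
`K` back into `K`. Properness makes this set compact, so it has finite measure, and its measure
times the maximum of `‖φ‖` bounds all orbit integrals at once.
-/

section Action

open Set
open scoped ENNReal NNReal

variable {G X : Type*}

/-- The transporter of `K` into `L`: the group elements `g` for which `g • K` meets `L`. Only one
point of `K` has to be carried into `L`, not the whole of `K`. Properness enters the argument
through the compactness of this set for compact `K` and `L`. -/
@[to_additive]
def smulTransporter (G : Type*) {X : Type*} [SMul G X] (K L : Set X) : Set G :=
  {g | ∃ x ∈ K, g • x ∈ L}

@[to_additive]
theorem isCompact_smulTransporter [TopologicalSpace G] [TopologicalSpace X] [Group G]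
    [MulAction G X] [ProperSMul G X] {K L : Set X} (hK : IsCompact K) (hL : IsCompact L) :
    IsCompact (smulTransporter G K L) := by
  have hpre := ProperSMul.isProperMap_smul_pair (G := G).isCompact_preimage (hL.prod hK)
  convert hpre.image continuous_fst
  ext g
  simp [smulTransporter, and_comm]

section Measure

variable [MeasurableSpace G] (μ : Measure G)

@[to_additive]
theorem lintegral_smul_le_mul_measure_smulTransporter_of_mem [SMul G X] {f : X → ℝ≥0∞}
    {B : ℝ≥0∞} {K L : Set X} (hB : ∀ x, f x ≤ B) (hL : f.support ⊆ L) {x : X} (hx : x ∈ K) :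
    ∫⁻ g, f (g • x) ∂μ ≤ B * μ (smulTransporter G K L) := by
  refine (lintegral_mono fun g ↦ ?_).trans (lintegral_indicator_const_le _ B)
  refine le_indicator_apply (fun _ ↦ hB _) fun hg ↦ ?_
  have hgx : g • x ∉ L := fun h ↦ hg ⟨x, hx, h⟩
  exact (Function.notMem_support.mp (notMem_subset hL hgx)).le

variable [Group G] [MulAction G X]

@[to_additive]
theorem lintegral_smul_smul_eq_self [MeasurableMul G] [μ.IsMulRightInvariant]
    (f : X → ℝ≥0∞) (h : G) (x : X) :
    ∫⁻ g, f (g • h • x) ∂μ = ∫⁻ g, f (g • x) ∂μ := by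
  simpa only [mul_smul] using lintegral_mul_right_eq_self (μ := μ) (fun g ↦ f (g • x)) h

@[to_additive]
theorem lintegral_smul_le_mul_measure_smulTransporter [MeasurableMul G] [μ.IsMulRightInvariant]
    {f : X → ℝ≥0∞} {B : ℝ≥0∞} {K : Set X} (hB : ∀ x, f x ≤ B) (hK : f.support ⊆ K) (x : X) :
    ∫⁻ g, f (g • x) ∂μ ≤ B * μ (smulTransporter G K K) := by
  by_cases h_meets : ∃ h : G, h • x ∈ K
  · obtain ⟨h, hx⟩ := h_meets
    rw [← lintegral_smul_smul_eq_self μ f h x]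
    exact lintegral_smul_le_mul_measure_smulTransporter_of_mem μ hB hK hx
  · have hf : ∀ g : G, f (g • x) = 0 := fun g ↦
      Function.notMem_support.mp fun hg ↦ h_meets ⟨g, hK hg⟩
    simp only [hf, lintegral_zero, zero_le]

@[to_additive orbit_integral_uniformly_bounded_general_vadd]
theorem orbit_integral_uniformly_bounded_general {E : Type*} [NormedAddGroup E]
    [TopologicalSpace G] [TopologicalSpace X] [ProperSMul G X] [MeasurableMul G]
    [μ.IsMulRightInvariant] [IsFiniteMeasureOnCompacts μ]
    {φ : X → E} (hφ : Continuous φ) (hsupp : HasCompactSupport φ) :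
    ∃ C : ℝ≥0, ∀ x, ∫⁻ g, ‖φ (g • x)‖ₑ ∂μ ≤ C := by
  obtain ⟨B, hB⟩ := hφ.bounded_above_of_compact_support hsupp
  have hB' : ∀ x, ‖φ x‖ₑ ≤ ENNReal.ofReal B := fun x ↦ by
    simpa only [ofReal_norm] using ENNReal.ofReal_le_ofReal (hB x)
  have hK : (‖φ ·‖ₑ).support ⊆ tsupport φ := fun x hx ↦
    subset_tsupport φ fun h0 ↦ hx (by simp [h0])
  have hfin : ENNReal.ofReal B * μ (smulTransporter G (tsupport φ) (tsupport φ)) ≠ ∞ :=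
    ENNReal.mul_ne_top ENNReal.ofReal_ne_top
      (isCompact_smulTransporter hsupp.isCompact hsupp.isCompact).measure_ne_top
  exact ⟨_, fun x ↦ (lintegral_smul_le_mul_measure_smulTransporter μ hB' hK x).trans
    (ENNReal.coe_toNNReal hfin).ge⟩

end Measure

end Action

theorem integral_norm_le_of_lintegral_enorm_le {Ω E : Type*} [MeasurableSpace Ω]
    [SeminormedAddCommGroup E] {μ : Measure Ω} {f : Ω → E} {C : NNReal}
    (h : ∫⁻ ω, ‖f ω‖ₑ ∂μ ≤ C) : ∫ ω, ‖f ω‖ ∂μ ≤ C := by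
  have h_enorm : ‖∫ ω, ‖f ω‖ ∂μ‖ₑ ≤ C :=
    (enorm_integral_le_lintegral_enorm _).trans (by simpa only [enorm_norm] using h)
  exact (Real.le_norm_self _).trans (enorm_le_coe.mp h_enorm)

/-- For a proper continuous action of `ℝ^l` on a Hausdorff space and a compactly
supported continuous function `φ`, the orbit integrals `∫_{ℝ^l} |φ(α_z(p))| dz`
are uniformly bounded in `p`. -/
theorem orbit_integral_uniformly_bounded
    (l : ℕ) (hl : 1 ≤ l) {M : Type*} [TopologicalSpace M] [T2Space M]
    (α : (Fin l → ℝ) → M → M)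
    (hzero : α 0 = id)
    (hadd : ∀ z w : Fin l → ℝ, α (z + w) = α z ∘ α w)
    (hcont : Continuous fun zp : (Fin l → ℝ) × M => α zp.1 zp.2)
    (hproper : IsProperMap fun zp : (Fin l → ℝ) × M => (zp.2, α zp.1 zp.2))
    (φ : M → ℂ) (hφ : Continuous φ) (hsupp : HasCompactSupport φ) :
    ∃ C : ℝ, ∀ p : M, (∫ z : Fin l → ℝ, ‖φ (α z p)‖) ≤ C := by
  let _ : AddAction (Fin l → ℝ) M :=
    { vadd := α, zero_vadd := congrFun hzero, add_vadd := fun z w ↦ congrFun (hadd z w) }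
  have : ProperVAdd (Fin l → ℝ) M := ⟨(Homeomorph.prodComm M M).isProperMap.comp hproper⟩
  obtain ⟨C, hC⟩ :=
    orbit_integral_uniformly_bounded_general_vadd (volume : Measure (Fin l → ℝ)) hφ hsupp
  exact ⟨C, fun p ↦ integral_norm_le_of_lintegral_enorm_le (hC p)⟩
end

section
/- Let m > 0 and v ∈ ℝ^4, and for each k ∈ ℤ^4 set T_k(v) := ∫_0^∞ (4πt)^{-2} e^{-t m²} e^{-‖2πk - v‖²/(4t)} dt ∈ [0, ∞], where ‖·‖ is the Euclidean norm. Then Σ_{k ∈ ℤ^4} T_k(v) < ∞ if and only if v ∉ 2πℤ^4. -/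
open MeasureTheory Real

/-- Euclidean norm of a vector in `ℝ^l`. -/
noncomputable def eNorm {l : ℕ} (v : Fin l → ℝ) : ℝ :=
  Real.sqrt (∑ i, (v i) ^ 2)

/-!
Only small `t` can make a single term diverge. If `2πk = v`, the factor `e^{-‖2πk - v‖²/4t}` is
absent and `t^{-s}` with `s ≥ 1` is not integrable at `0`. Otherwise put `a = ‖2πk - v‖² > 0`; then
`e^{-a/4t} ≤ n! (4t/a)ⁿ` for every `n`. A large `n` cures the singularity at `t = 0`, while the mass
controls `t → ∞`, so the term is at most a constant times `a⁻ⁿ = ‖2πk - v‖^{-2n}`, which is summable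
over a lattice once `2n` exceeds its rank.
-/

open Set Module
open scoped ENNReal Nat

/-- The proper-time integral `∫₀^∞ (4πt)^{-s} e^{-tm²} e^{-a/4t} dt`, i.e. the propagator of a
scalar field of mass `m` in dimension `2s` between points at squared distance `a`. It takes values
in `[0, ∞]`, so that ultraviolet divergence is the value `∞`. -/
noncomputable def schwingerIntegral (s m a : ℝ) : ℝ≥0∞ :=
  ∫⁻ t in Ioi (0 : ℝ),
    ENNReal.ofReal (((4 * π * t) ^ s)⁻¹ * Real.exp (-t * m ^ 2) * Real.exp (-a / (4 * t)))

lemma setLIntegral_Ioo_rpow_eq_top {r : ℝ} (hr : r ≤ -1) :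
    ∫⁻ t in Ioo (0 : ℝ) 1, ENNReal.ofReal (t ^ r) = ⊤ := by
  by_contra hfin
  have hint : IntegrableOn (fun t : ℝ => t ^ r) (Ioo 0 1) :=
    (lintegral_ofReal_ne_top_iff_integrable (by fun_prop)
      (ae_restrict_of_forall_mem measurableSet_Ioo fun t ht => rpow_nonneg ht.1.le r)).mp hfin
  exact hr.not_gt ((intervalIntegral.integrableOn_Ioo_rpow_iff one_pos).mp hint)

lemma schwingerIntegral_zero_eq_top {s : ℝ} (hs : 1 ≤ s) (m : ℝ) :
    schwingerIntegral s m 0 = ⊤ := by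
  set c : ℝ := ((4 * π) ^ s)⁻¹ * Real.exp (-m ^ 2)
  have hc : 0 < c := by positivity
  have hbound : ∀ t ∈ Ioo (0 : ℝ) 1, c * t ^ (-s) ≤
      ((4 * π * t) ^ s)⁻¹ * Real.exp (-t * m ^ 2) * Real.exp (-0 / (4 * t)) := by
    intro t ht
    have hexp : Real.exp (-m ^ 2) ≤ Real.exp (-t * m ^ 2) :=
      Real.exp_le_exp.mpr (by nlinarith [ht.2, sq_nonneg m])
    have ht₀ : 0 ≤ t := ht.1.le
    calc c * t ^ (-s) = ((4 * π * t) ^ s)⁻¹ * Real.exp (-m ^ 2) := by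
          rw [mul_rpow (by positivity) ht₀, rpow_neg ht₀, mul_inv]
          ring
      _ ≤ ((4 * π * t) ^ s)⁻¹ * Real.exp (-t * m ^ 2) := by gcongr
      _ = _ := by simp only [neg_zero, zero_div, Real.exp_zero, mul_one]
  rw [eq_top_iff]
  calc ⊤ = ENNReal.ofReal c * ∫⁻ t in Ioo (0 : ℝ) 1, ENNReal.ofReal (t ^ (-s)) := by
        rw [setLIntegral_Ioo_rpow_eq_top (by linarith), ENNReal.mul_top (by simpa using hc)]
    _ = ∫⁻ t in Ioo (0 : ℝ) 1, ENNReal.ofReal (c * t ^ (-s)) := by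
        simp only [ENNReal.ofReal_mul hc.le]
        rw [lintegral_const_mul _ (by fun_prop)]
    _ ≤ ∫⁻ t in Ioo (0 : ℝ) 1, ENNReal.ofReal
          (((4 * π * t) ^ s)⁻¹ * Real.exp (-t * m ^ 2) * Real.exp (-0 / (4 * t))) :=
        setLIntegral_mono (by fun_prop) fun t ht => ENNReal.ofReal_le_ofReal (hbound t ht)
    _ ≤ schwingerIntegral s m 0 := lintegral_mono_set Ioo_subset_Ioi_self

lemma exp_neg_le_factorial_mul_inv_pow {x : ℝ} (hx : 0 < x) (n : ℕ) :
    Real.exp (-x) ≤ n ! * x⁻¹ ^ n := by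
  rw [Real.exp_neg, inv_pow, ← div_eq_mul_inv, ← inv_div]
  exact inv_anti₀ (by positivity) (Real.pow_div_factorial_le_exp x hx.le n)

lemma exists_schwingerIntegral_le_inv_pow {s m : ℝ} (hm : m ≠ 0) {n : ℕ} (hn : s < n + 1) :
    ∃ C : ℝ≥0∞, C ≠ ⊤ ∧
      ∀ a : ℝ, 0 < a → schwingerIntegral s m a ≤ ENNReal.ofReal (a⁻¹ ^ n) * C := by
  set g : ℝ → ℝ := fun t =>
    ((4 * π) ^ s)⁻¹ * n ! * 4 ^ n * (t ^ (n - s) * Real.exp (-m ^ 2 * t ^ (1 : ℝ))) with hg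
  have hg_int : IntegrableOn g (Ioi 0) :=
    (integrableOn_rpow_mul_exp_neg_mul_rpow (by linarith) one_pos (by positivity)).const_mul _
  refine ⟨∫⁻ t in Ioi 0, ENNReal.ofReal (g t), hg_int.lintegral_lt_top.ne, fun a ha => ?_⟩
  have hbound : ∀ t ∈ Ioi (0 : ℝ), ((4 * π * t) ^ s)⁻¹ * Real.exp (-t * m ^ 2) *
      Real.exp (-a / (4 * t)) ≤ a⁻¹ ^ n * g t := by
    intro t (ht : 0 < t)
    calc ((4 * π * t) ^ s)⁻¹ * Real.exp (-t * m ^ 2) * Real.exp (-a / (4 * t))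
        ≤ ((4 * π * t) ^ s)⁻¹ * Real.exp (-t * m ^ 2) * (n ! * (a / (4 * t))⁻¹ ^ n) := by
          rw [neg_div]
          gcongr
          exact exp_neg_le_factorial_mul_inv_pow (by positivity) n
      _ = a⁻¹ ^ n * g t := by
          simp only [hg]
          rw [mul_rpow (by positivity) ht.le, rpow_sub ht, rpow_natCast, rpow_one, inv_div, div_pow,
            mul_pow, inv_pow]
          field_simp
  rw [← lintegral_const_mul _ (by fun_prop)]
  refine setLIntegral_mono (by fun_prop) fun t ht => ?_
  rw [← ENNReal.ofReal_mul (by positivity)]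
  exact ENNReal.ofReal_le_ofReal (hbound t ht)

section Lattice

variable {E : Type*} [NormedAddCommGroup E]

lemma tsum_schwingerIntegral_eq_top_of_mem (L : Submodule ℤ E) {s : ℝ} (hs : 1 ≤ s) (m : ℝ)
    {x : E} (hx : x ∈ L) : ∑' z : L, schwingerIntegral s m (‖(z : E) - x‖ ^ 2) = ⊤ :=
  ENNReal.tsum_eq_top_of_eq_top ⟨⟨x, hx⟩, by simp [schwingerIntegral_zero_eq_top hs]⟩

variable [NormedSpace ℝ E] [FiniteDimensional ℝ E]

lemma tsum_schwingerIntegral_lt_top_of_notMem (L : Submodule ℤ E)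
    [DiscreteTopology L] (s : ℝ) {m : ℝ} (hm : m ≠ 0) {x : E} (hx : x ∉ L) :
    ∑' z : L, schwingerIntegral s m (‖(z : E) - x‖ ^ 2) < ⊤ := by
  obtain ⟨n, hn⟩ := exists_nat_gt (max s (finrank ℤ L))
  obtain ⟨hsn, hLn⟩ := max_lt_iff.mp hn
  obtain ⟨C, hC, hbound⟩ := exists_schwingerIntegral_le_inv_pow hm (hsn.trans (lt_add_one _))
  have hpos (z : L) : 0 < ‖(z : E) - x‖ ^ 2 := by
    have : (z : E) - x ≠ 0 := sub_ne_zero.mpr fun h => hx (h ▸ z.2)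
    positivity
  have hsum : Summable fun z : L => ((‖(z : E) - x‖ ^ 2)⁻¹) ^ n := by
    have hrank : finrank ℤ L < 2 * n := by
      have : finrank ℤ L < n := mod_cast hLn
      omega
    refine (ZLattice.summable_norm_sub_inv_pow L (2 * n) hrank x).congr fun z => ?_
    rw [pow_mul, inv_pow]
  calc ∑' z : L, schwingerIntegral s m (‖(z : E) - x‖ ^ 2)
      ≤ ∑' z : L, ENNReal.ofReal (((‖(z : E) - x‖ ^ 2)⁻¹) ^ n) * C :=
        ENNReal.tsum_le_tsum fun z => hbound _ (hpos z)
    _ = (∑' z : L, ENNReal.ofReal (((‖(z : E) - x‖ ^ 2)⁻¹) ^ n)) * C := ENNReal.tsum_mul_right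
    _ < ⊤ := ENNReal.mul_lt_top hsum.tsum_ofReal_lt_top hC.lt_top

lemma tsum_schwingerIntegral_lt_top_iff (L : Submodule ℤ E) [DiscreteTopology L]
    {s m : ℝ} (hs : 1 ≤ s) (hm : m ≠ 0) (x : E) :
    ∑' z : L, schwingerIntegral s m (‖(z : E) - x‖ ^ 2) < ⊤ ↔ x ∉ L :=
  ⟨fun h hx => h.ne (tsum_schwingerIntegral_eq_top_of_mem L hs m hx),
    tsum_schwingerIntegral_lt_top_of_notMem L s hm⟩

end Lattice

lemma eNorm_eq_norm_toLp {d : ℕ} (w : Fin d → ℝ) : eNorm w = ‖WithLp.toLp 2 w‖ := by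
  simp [eNorm, EuclideanSpace.norm_eq]

/-- The basis `2πe₁, …, 2πe_d` of `ℝ^d`, whose `ℤ`-span is the lattice `2πℤ^d`. -/
noncomputable def twoPiBasis (d : ℕ) : Basis (Fin d) ℝ (EuclideanSpace ℝ (Fin d)) :=
  (EuclideanSpace.basisFun (Fin d) ℝ).toBasis.unitsSMul fun _ => Units.mk0 (2 * π) two_pi_pos.ne'

lemma twoPiBasis_apply {d : ℕ} (i : Fin d) :
    twoPiBasis d i = (2 * π) • EuclideanSpace.single i 1 := by
  rw [twoPiBasis, Basis.unitsSMul_apply]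
  simp [Units.smul_def, -Units.mk0_mul]

/-- The parametrisation `k ↦ 2πk` of the lattice `2πℤ^d` by `ℤ^d`. -/
noncomputable def twoPiLatticeEquiv (d : ℕ) :
    (Fin d → ℤ) ≃ Submodule.span ℤ (range (twoPiBasis d)) :=
  ((twoPiBasis d).restrictScalars ℤ).equivFun.symm.toEquiv

lemma coe_twoPiLatticeEquiv {d : ℕ} (k : Fin d → ℤ) :
    (twoPiLatticeEquiv d k : EuclideanSpace ℝ (Fin d)) =
      WithLp.toLp 2 fun i => 2 * π * (k i : ℝ) := by
  ext j
  rw [twoPiLatticeEquiv, LinearEquiv.coe_toEquiv, Basis.equivFun_symm_apply, Submodule.coe_sum]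
  simp [twoPiBasis_apply, Pi.single_apply, mul_comm]

lemma toLp_mem_span_twoPiBasis_iff {d : ℕ} (v : Fin d → ℝ) :
    WithLp.toLp 2 v ∈ Submodule.span ℤ (range (twoPiBasis d)) ↔
      ∃ k : Fin d → ℤ, v = fun i => 2 * π * (k i : ℝ) := by
  constructor
  · intro hv
    obtain ⟨k, hk⟩ := (twoPiLatticeEquiv d).surjective ⟨_, hv⟩
    refine ⟨k, WithLp.toLp_injective 2 ?_⟩
    rw [← coe_twoPiLatticeEquiv, hk]
  · rintro ⟨k, rfl⟩
    exact coe_twoPiLatticeEquiv k ▸ (twoPiLatticeEquiv d k).2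

theorem nonplanar_tadpole_finite_iff_general {d : ℕ} {s m : ℝ} (hs : 1 ≤ s) (hm : m ≠ 0)
    (v : Fin d → ℝ) :
    ∑' k : Fin d → ℤ, schwingerIntegral s m (eNorm (fun i => 2 * π * (k i : ℝ) - v i) ^ 2) < ⊤ ↔
      ¬ ∃ k : Fin d → ℤ, v = fun i => 2 * π * (k i : ℝ) := by
  rw [← toLp_mem_span_twoPiBasis_iff, ← tsum_schwingerIntegral_lt_top_iff _ hs hm,
    ← (twoPiLatticeEquiv d).tsum_eq]
  simp only [coe_twoPiLatticeEquiv, eNorm_eq_norm_toLp, ← WithLp.toLp_sub, Pi.sub_def]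

/-- The Schwinger representation of the non-planar tadpole mode sum on the
noncommutative 4-torus: `Σ_{k ∈ ℤ^4} ∫_0^∞ (4πt)^{-2} e^{-tm²} e^{-‖2πk - v‖²/4t} dt`
is finite if and only if `v ∉ 2πℤ^4`. -/
theorem nonplanar_tadpole_finite_iff
    (m : ℝ) (hm : 0 < m) (v : Fin 4 → ℝ) :
    (∑' k : Fin 4 → ℤ,
        ∫⁻ t in Set.Ioi (0 : ℝ),
          ENNReal.ofReal (((4 * π * t) ^ 2)⁻¹ * Real.exp (-t * m ^ 2) *
            Real.exp (-(eNorm (fun i => 2 * π * (k i : ℝ) - v i)) ^ 2 / (4 * t)))) < ⊤ ↔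
      ¬ ∃ k : Fin 4 → ℤ, v = fun i => 2 * π * (k i : ℝ) := by
  simpa only [schwingerIntegral, rpow_ofNat] using
    nonplanar_tadpole_finite_iff_general one_le_two hm.ne' v
end
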